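/- Let p, q, r be natural numbers with p ≥ 1 and q ≥ 1, and set n = p + q + r − 1. In the formal power series ring ℚ⟦t⟧, where (1 − t²) is invertible, one has ((∑_{i=0}^{n} t^{2i}) − t^{2(q+r)}(∑_{i=0}^{p−1} t^{2i}) − t^{2(p+r)}(∑_{i=0}^{q−1} t^{2i}))·(1−t²)^{−1} − t^{2p}·(∑_{i=0}^{r−1} t^{2i})·(1−t²)^{−1} = (1 − t^{2p})·(1 − t^{2(q+r)})·(1−t²)^{−2}. -/

import Mathlib

open PowerSeries Finset

/-!
Put `y = t ^ 2` and `S m = ∑_{i < m} y ^ i`, so that `S m` is the Poincaré polynomial of `ℂP^{m-1}`.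
Cutting the sum for `ℂPⁿ` into blocks of lengths `p`, `r`, `q` gives
`S (p + q + r) = S p + y ^ p * S r + y ^ (p + r) * S q`. The fixed-point correction cancels the
second term, the stratum of `ℂP^{q-1}` cancels the third, and subtracting the stratum
`y ^ (q + r) * S p` of `ℂP^{p-1}` leaves `(1 - y ^ (q + r)) * S p`.
-/

section GeomSum

variable {R : Type*}

theorem geom_sum_add [Semiring R] (y : R) (m k : ℕ) :
    ∑ i ∈ range (m + k), y ^ i = ∑ i ∈ range m, y ^ i + y ^ m * ∑ i ∈ range k, y ^ i := by
  simp only [sum_range_add, pow_add, mul_sum]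

variable [Ring R] {y u : R}

theorem geom_sum_eq_mul_of_mul_eq_one (hu : (1 - y) * u = 1) (m : ℕ) :
    ∑ i ∈ range m, y ^ i = (1 - y ^ m) * u := by
  rw [← geom_sum_mul_neg, mul_assoc, hu, mul_one]

theorem geom_sum_add_add_sub_eq_one_sub_pow_mul (y : R) (p q r : ℕ) :
    ∑ i ∈ range (p + q + r), y ^ i - y ^ (q + r) * ∑ i ∈ range p, y ^ i
        - y ^ (p + r) * ∑ i ∈ range q, y ^ i - y ^ p * ∑ i ∈ range r, y ^ i
      = (1 - y ^ (q + r)) * ∑ i ∈ range p, y ^ i := by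
  rw [add_right_comm p q r, geom_sum_add y (p + r) q, geom_sum_add y p r, sub_mul, one_mul]
  abel

theorem circle_quotient_intersection_poincare_general (hu : (1 - y) * u = 1) (p q r : ℕ) :
    (∑ i ∈ range (p + q + r), y ^ i - y ^ (q + r) * ∑ i ∈ range p, y ^ i
        - y ^ (p + r) * ∑ i ∈ range q, y ^ i) * u
      - y ^ p * (∑ i ∈ range r, y ^ i) * u
    = (1 - y ^ p) * (1 - y ^ (q + r)) * u ^ 2 := by
  have factors_commute : Commute (1 - y ^ (q + r)) (1 - y ^ p) :=
    (Commute.one_left _).sub_left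
      ((Commute.one_right _).sub_right (Commute.pow_pow_self y (q + r) p))
  calc
    _ = (1 - y ^ (q + r)) * (∑ i ∈ range p, y ^ i) * u := by
      rw [← sub_mul, geom_sum_add_add_sub_eq_one_sub_pow_mul]
    _ = (1 - y ^ (q + r)) * ((1 - y ^ p) * u) * u := by
      rw [geom_sum_eq_mul_of_mul_eq_one hu]
    _ = (1 - y ^ p) * (1 - y ^ (q + r)) * u ^ 2 := by
      rw [← mul_assoc, factors_commute.eq, mul_assoc, ← sq]

end GeomSum

theorem circle_quotient_intersection_poincare (p q r n : ℕ) (hp : 1 ≤ p) (hq : 1 ≤ q)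
    (hn : n = p + q + r - 1) :
    ((∑ i ∈ Finset.range (n + 1), (PowerSeries.X : PowerSeries ℚ) ^ (2 * i))
        - PowerSeries.X ^ (2 * (q + r))
            * ∑ i ∈ Finset.range p, (PowerSeries.X : PowerSeries ℚ) ^ (2 * i)
        - PowerSeries.X ^ (2 * (p + r))
            * ∑ i ∈ Finset.range q, (PowerSeries.X : PowerSeries ℚ) ^ (2 * i))
          * (1 - PowerSeries.X ^ 2)⁻¹
      - PowerSeries.X ^ (2 * p)
          * (∑ i ∈ Finset.range r, (PowerSeries.X : PowerSeries ℚ) ^ (2 * i))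
          * (1 - PowerSeries.X ^ 2)⁻¹
    = (1 - PowerSeries.X ^ (2 * p)) * (1 - PowerSeries.X ^ (2 * (q + r)))
        * ((1 - PowerSeries.X ^ 2)⁻¹) ^ 2 := by
  have hn_succ : n + 1 = p + q + r := by omega
  simpa only [hn_succ, pow_mul] using circle_quotient_intersection_poincare_general
    (PowerSeries.mul_inv_cancel (1 - (X : ℚ⟦X⟧) ^ 2) (by simp)) p q r
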